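/- Canonicity for λPRK: (1) if ⊢ t : P is derivable with empty typing context, then t reduces (in zero or more steps) to a canonical term; (2) if Γ ⊢ t : P with Γ classical and P strong, then either t →* t' with t' canonical, or t →* K[t'] where K is a case-context and t' is an open explosion; (3) if Γ ⊢ t : P with Γ and P classical, then either t →* λ±x.t' for some t', or t →* E[t'] where E is an eliminative context and t' is a variable or an open explosion. -/

import Mathlib

/-!
Fix a classical valuation and read `A⁺`, `A⊕` as the truth of `A`, and `A⁻`, `A⊖` as its falsity.
Every typing rule is sound for this reading, yet the two arguments of an explosion receive
contradictory readings; so no explosion is typable in the empty context and, by strengthening, every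
typable explosion is open. Such a term is already an admissible result and never has to be
evaluated. In particular `t •± s`, the only eliminator of `A⊕` and `A⊖`, is never evaluated, so the
equations `A⊕ ≅ A⊖ → A⁺` and `A⊖ ≅ A⊕ → A⁻` do not enter the reducibility predicate. Only `πᵢ±`,
`case±` and `¬e±` remain to be evaluated, and for these an untyped inductive predicate suffices.
-/

/-- Pure propositions: A ::= α | A∧B | A∨B | ¬A -/
inductive PureProp : Type
  | var : ℕ → PureProp
  | conj : PureProp → PureProp → PureProp
  | disj : PureProp → PureProp → PureProp
  | neg : PureProp → PureProp
  deriving DecidableEq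

/-- Moded propositions: A⁺ (sp), A⁻ (sn), A⊕ (cp), A⊖ (cn). -/
inductive MProp : Type
  | sp : PureProp → MProp
  | sn : PureProp → MProp
  | cp : PureProp → MProp
  | cn : PureProp → MProp
  deriving DecidableEq

/-- The opposite P~: flips the sign, keeps the strength. -/
def MProp.opp : MProp → MProp
  | .sp A => .sn A
  | .sn A => .sp A
  | .cp A => .cn A
  | .cn A => .cp A

def MProp.isStrong : MProp → Prop
  | .sp _ => True
  | .sn _ => True
  | .cp _ => False
  | .cn _ => False

def MProp.isClassical : MProp → Prop
  | .sp _ => False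
  | .sn _ => False
  | .cp _ => True
  | .cn _ => True

inductive Sign : Type | pos | neg
  deriving DecidableEq

def Sign.flip : Sign → Sign
  | .pos => .neg
  | .neg => .pos

/-- Terms of λPRK, with de Bruijn indices for bound variables
    (a faithful rendering of terms modulo α-renaming). -/
inductive Tm : Type
  | var : ℕ → Tm
  | abs : MProp → Tm → Tm → Tm                    -- abs_P(t,s)
  | pair : Sign → Tm → Tm → Tm                    -- ⟨t,s⟩±
  | proj : Sign → Bool → Tm → Tm                  -- πᵢ±(t), i encoded by a Bool
  | inj : Sign → Bool → Tm → Tm                   -- inᵢ±(t)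
  | case : Sign → Tm → MProp → Tm → MProp → Tm → Tm  -- case±(t, x:P.s, y:Q.u)
  | negi : Sign → Tm → Tm                         -- ¬i±(t)
  | nege : Sign → Tm → Tm                         -- ¬e±(t)
  | lam : Sign → MProp → Tm → Tm                  -- λ±x:P.t
  | app : Sign → Tm → Tm → Tm                     -- t •± s
  deriving DecidableEq

/-- Shift free de Bruijn indices ≥ c up by d. -/
def Tm.shift (d : ℕ) : ℕ → Tm → Tm
  | c, .var k => if k < c then .var k else .var (k + d)
  | c, .abs P t s => .abs P (Tm.shift d c t) (Tm.shift d c s)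
  | c, .pair sg t s => .pair sg (Tm.shift d c t) (Tm.shift d c s)
  | c, .proj sg i t => .proj sg i (Tm.shift d c t)
  | c, .inj sg i t => .inj sg i (Tm.shift d c t)
  | c, .case sg t P s Q u =>
      .case sg (Tm.shift d c t) P (Tm.shift d (c+1) s) Q (Tm.shift d (c+1) u)
  | c, .negi sg t => .negi sg (Tm.shift d c t)
  | c, .nege sg t => .nege sg (Tm.shift d c t)
  | c, .lam sg P t => .lam sg P (Tm.shift d (c+1) t)
  | c, .app sg t s => .app sg (Tm.shift d c t) (Tm.shift d c s)

/-- Capture-avoiding substitution t[j := s]. -/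
def Tm.subst : Tm → ℕ → Tm → Tm
  | .var k, j, s => if k = j then s else if j < k then .var (k - 1) else .var k
  | .abs P t u, j, s => .abs P (Tm.subst t j s) (Tm.subst u j s)
  | .pair sg t u, j, s => .pair sg (Tm.subst t j s) (Tm.subst u j s)
  | .proj sg i t, j, s => .proj sg i (Tm.subst t j s)
  | .inj sg i t, j, s => .inj sg i (Tm.subst t j s)
  | .case sg t P u Q v, j, s =>
      .case sg (Tm.subst t j s) P (Tm.subst u (j+1) (Tm.shift 1 0 s)) Q (Tm.subst v (j+1) (Tm.shift 1 0 s))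
  | .negi sg t, j, s => .negi sg (Tm.subst t j s)
  | .nege sg t, j, s => .nege sg (Tm.subst t j s)
  | .lam sg P t, j, s => .lam sg P (Tm.subst t (j+1) (Tm.shift 1 0 s))
  | .app sg t u, j, s => .app sg (Tm.subst t j s) (Tm.subst u j s)

/-- abs'(t,s): for t of classical type of sign sg and s of the opposite classical type,
    abs'(t,s) = abs(t •sg s, s •(flip sg) t). -/
def absE (Q : MProp) (sg : Sign) (t s : Tm) : Tm :=
  Tm.abs Q (Tm.app sg t s) (Tm.app sg.flip s t)

/-- One-step reduction of λPRK, closed under arbitrary contexts. -/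
inductive Red : Tm → Tm → Prop
  | proj1 {sg t1 t2} : Red (.proj sg false (.pair sg t1 t2)) t1
  | proj2 {sg t1 t2} : Red (.proj sg true (.pair sg t1 t2)) t2
  | case1 {sg t P Q s1 s2} : Red (.case sg (.inj sg false t) P s1 Q s2) (Tm.subst s1 0 t)
  | case2 {sg t P Q s1 s2} : Red (.case sg (.inj sg true t) P s1 Q s2) (Tm.subst s2 0 t)
  | negRed {sg t} : Red (.nege sg (.negi sg t)) t
  | beta {sg P t s} : Red (.app sg (.lam sg P t) s) (Tm.subst t 0 s)
  | absPairInj1 {Q sg t1 t2 s} :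
      Red (.abs Q (.pair sg t1 t2) (.inj sg.flip false s)) (absE Q sg t1 s)
  | absPairInj2 {Q sg t1 t2 s} :
      Red (.abs Q (.pair sg t1 t2) (.inj sg.flip true s)) (absE Q sg t2 s)
  | absInjPair1 {Q sg t s1 s2} :
      Red (.abs Q (.inj sg false t) (.pair sg.flip s1 s2)) (absE Q sg t s1)
  | absInjPair2 {Q sg t s1 s2} :
      Red (.abs Q (.inj sg true t) (.pair sg.flip s1 s2)) (absE Q sg t s2)
  | absNeg {Q sg t s} :
      Red (.abs Q (.negi sg t) (.negi sg.flip s)) (absE Q sg.flip t s)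
  | absCL {Q t t' s} : Red t t' → Red (.abs Q t s) (.abs Q t' s)
  | absCR {Q t s s'} : Red s s' → Red (.abs Q t s) (.abs Q t s')
  | pairCL {sg t t' s} : Red t t' → Red (.pair sg t s) (.pair sg t' s)
  | pairCR {sg t s s'} : Red s s' → Red (.pair sg t s) (.pair sg t s')
  | projC {sg i t t'} : Red t t' → Red (.proj sg i t) (.proj sg i t')
  | injC {sg i t t'} : Red t t' → Red (.inj sg i t) (.inj sg i t')
  | caseC1 {sg t t' P s Q u} : Red t t' → Red (.case sg t P s Q u) (.case sg t' P s Q u)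
  | caseC2 {sg t P s s' Q u} : Red s s' → Red (.case sg t P s Q u) (.case sg t P s' Q u)
  | caseC3 {sg t P s Q u u'} : Red u u' → Red (.case sg t P s Q u) (.case sg t P s Q u')
  | negiC {sg t t'} : Red t t' → Red (.negi sg t) (.negi sg t')
  | negeC {sg t t'} : Red t t' → Red (.nege sg t) (.nege sg t')
  | lamC {sg P t t'} : Red t t' → Red (.lam sg P t) (.lam sg P t')
  | appCL {sg t t' s} : Red t t' → Red (.app sg t s) (.app sg t' s)
  | appCR {sg t s s'} : Red s s' → Red (.app sg t s) (.app sg t s')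

/-- Zero-or-more-step reduction. -/
def RedStar : Tm → Tm → Prop := Relation.ReflTransGen Red

/-- The λPRK typing judgment Γ ⊢ t : P.  Contexts are lists (de Bruijn). -/
inductive TJ : List MProp → Tm → MProp → Prop
  | var {Γ : List MProp} {n P} : Γ[n]? = some P → TJ Γ (.var n) P
  | absT {Γ t s P Q} : MProp.isStrong P → TJ Γ t P → TJ Γ s P.opp → TJ Γ (.abs Q t s) Q
  | pairP {Γ t s A B} : TJ Γ t (MProp.cp A) → TJ Γ s (MProp.cp B) →
      TJ Γ (.pair .pos t s) (MProp.sp (PureProp.conj A B))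
  | pairN {Γ t s A B} : TJ Γ t (MProp.cn A) → TJ Γ s (MProp.cn B) →
      TJ Γ (.pair .neg t s) (MProp.sn (PureProp.disj A B))
  | projP1 {Γ t A B} : TJ Γ t (MProp.sp (PureProp.conj A B)) → TJ Γ (.proj .pos false t) (MProp.cp A)
  | projP2 {Γ t A B} : TJ Γ t (MProp.sp (PureProp.conj A B)) → TJ Γ (.proj .pos true t) (MProp.cp B)
  | projN1 {Γ t A B} : TJ Γ t (MProp.sn (PureProp.disj A B)) → TJ Γ (.proj .neg false t) (MProp.cn A)
  | projN2 {Γ t A B} : TJ Γ t (MProp.sn (PureProp.disj A B)) → TJ Γ (.proj .neg true t) (MProp.cn B)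
  | injP1 {Γ t A B} : TJ Γ t (MProp.cp A) → TJ Γ (.inj .pos false t) (MProp.sp (PureProp.disj A B))
  | injP2 {Γ t A B} : TJ Γ t (MProp.cp B) → TJ Γ (.inj .pos true t) (MProp.sp (PureProp.disj A B))
  | injN1 {Γ t A B} : TJ Γ t (MProp.cn A) → TJ Γ (.inj .neg false t) (MProp.sn (PureProp.conj A B))
  | injN2 {Γ t A B} : TJ Γ t (MProp.cn B) → TJ Γ (.inj .neg true t) (MProp.sn (PureProp.conj A B))
  | caseP {Γ t s u A B P} : TJ Γ t (MProp.sp (PureProp.disj A B)) →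
      TJ (MProp.cp A :: Γ) s P → TJ (MProp.cp B :: Γ) u P →
      TJ Γ (.case .pos t (MProp.cp A) s (MProp.cp B) u) P
  | caseN {Γ t s u A B P} : TJ Γ t (MProp.sn (PureProp.conj A B)) →
      TJ (MProp.cn A :: Γ) s P → TJ (MProp.cn B :: Γ) u P →
      TJ Γ (.case .neg t (MProp.cn A) s (MProp.cn B) u) P
  | negiP {Γ t A} : TJ Γ t (MProp.cn A) → TJ Γ (.negi .pos t) (MProp.sp (PureProp.neg A))
  | negiN {Γ t A} : TJ Γ t (MProp.cp A) → TJ Γ (.negi .neg t) (MProp.sn (PureProp.neg A))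
  | negeP {Γ t A} : TJ Γ t (MProp.sp (PureProp.neg A)) → TJ Γ (.nege .pos t) (MProp.cn A)
  | negeN {Γ t A} : TJ Γ t (MProp.sn (PureProp.neg A)) → TJ Γ (.nege .neg t) (MProp.cp A)
  | lamP {Γ t A} : TJ (MProp.cn A :: Γ) t (MProp.sp A) → TJ Γ (.lam .pos (MProp.cn A) t) (MProp.cp A)
  | lamN {Γ t A} : TJ (MProp.cp A :: Γ) t (MProp.sn A) → TJ Γ (.lam .neg (MProp.cp A) t) (MProp.cn A)
  | appP {Γ t s A} : TJ Γ t (MProp.cp A) → TJ Γ s (MProp.cn A) → TJ Γ (.app .pos t s) (MProp.sp A)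
  | appN {Γ t s A} : TJ Γ t (MProp.cn A) → TJ Γ s (MProp.cp A) → TJ Γ (.app .neg t s) (MProp.sn A)

/-- Canonical terms: ⟨t,s⟩±, inᵢ±(t), ¬i±(t), λ±x.t. -/
def Tm.isCanonical : Tm → Prop
  | .pair _ _ _ => True
  | .inj _ _ _ => True
  | .negi _ _ => True
  | .lam _ _ _ => True
  | _ => False

/-- Explosions: abs_P(t,s) or t •± s. -/
def Tm.isExplosion : Tm → Prop
  | .abs _ _ _ => True
  | .app _ _ _ => True
  | _ => False

/-- All free de Bruijn indices of t are < c. -/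
def Tm.closedAt : ℕ → Tm → Prop
  | c, .var k => k < c
  | c, .abs _ t s => Tm.closedAt c t ∧ Tm.closedAt c s
  | c, .pair _ t s => Tm.closedAt c t ∧ Tm.closedAt c s
  | c, .proj _ _ t => Tm.closedAt c t
  | c, .inj _ _ t => Tm.closedAt c t
  | c, .case _ t _ s _ u => Tm.closedAt c t ∧ Tm.closedAt (c+1) s ∧ Tm.closedAt (c+1) u
  | c, .negi _ t => Tm.closedAt c t
  | c, .nege _ t => Tm.closedAt c t
  | c, .lam _ _ t => Tm.closedAt (c+1) t
  | c, .app _ t s => Tm.closedAt c t ∧ Tm.closedAt c s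

/-- A term is open if it has at least one free variable. -/
def Tm.isOpen (t : Tm) : Prop := ¬ Tm.closedAt 0 t

/-- Case-contexts K ::= □ | case±(K, x.t, y.s). -/
inductive CaseCtx : Type
  | hole : CaseCtx
  | case : Sign → CaseCtx → MProp → Tm → MProp → Tm → CaseCtx

def CaseCtx.plug : CaseCtx → Tm → Tm
  | .hole, t => t
  | .case sg K P s Q u, t => Tm.case sg (K.plug t) P s Q u

/-- Eliminative contexts E ::= □ | πᵢ±(E) | case±(E, x.t, y.s) | ¬e±(E). -/
inductive ElimCtx : Type
  | hole : ElimCtx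
  | proj : Sign → Bool → ElimCtx → ElimCtx
  | case : Sign → ElimCtx → MProp → Tm → MProp → Tm → ElimCtx
  | nege : Sign → ElimCtx → ElimCtx

def ElimCtx.plug : ElimCtx → Tm → Tm
  | .hole, t => t
  | .proj sg i E, t => Tm.proj sg i (E.plug t)
  | .case sg E P s Q u, t => Tm.case sg (E.plug t) P s Q u
  | .nege sg E, t => Tm.nege sg (E.plug t)

/-! ### Simultaneous substitution -/

/-- Lifts a renaming of de Bruijn indices under one binder. -/
def liftRen (f : ℕ → ℕ) : ℕ → ℕ
  | 0 => 0
  | n + 1 => f n + 1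

/-- Simultaneous renaming of free indices, needed to push substitutions under binders. -/
def Tm.rename : (ℕ → ℕ) → Tm → Tm
  | f, .var k => .var (f k)
  | f, .abs P t s => .abs P (t.rename f) (s.rename f)
  | f, .pair sg t s => .pair sg (t.rename f) (s.rename f)
  | f, .proj sg i t => .proj sg i (t.rename f)
  | f, .inj sg i t => .inj sg i (t.rename f)
  | f, .case sg t P s Q u =>
      .case sg (t.rename f) P (s.rename (liftRen f)) Q (u.rename (liftRen f))
  | f, .negi sg t => .negi sg (t.rename f)
  | f, .nege sg t => .nege sg (t.rename f)
  | f, .lam sg P t => .lam sg P (t.rename (liftRen f))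
  | f, .app sg t s => .app sg (t.rename f) (s.rename f)

/-- Lifts a simultaneous substitution under one binder. -/
def liftSubst (σ : ℕ → Tm) : ℕ → Tm
  | 0 => .var 0
  | n + 1 => (σ n).rename Nat.succ

/-- Simultaneous substitution of `σ n` for each free index `n`; unlike `Tm.subst`, it composes. -/
def Tm.substAll : (ℕ → Tm) → Tm → Tm
  | σ, .var k => σ k
  | σ, .abs P t s => .abs P (t.substAll σ) (s.substAll σ)
  | σ, .pair sg t s => .pair sg (t.substAll σ) (s.substAll σ)
  | σ, .proj sg i t => .proj sg i (t.substAll σ)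
  | σ, .inj sg i t => .inj sg i (t.substAll σ)
  | σ, .case sg t P s Q u =>
      .case sg (t.substAll σ) P (s.substAll (liftSubst σ)) Q (u.substAll (liftSubst σ))
  | σ, .negi sg t => .negi sg (t.substAll σ)
  | σ, .nege sg t => .nege sg (t.substAll σ)
  | σ, .lam sg P t => .lam sg P (t.substAll (liftSubst σ))
  | σ, .app sg t s => .app sg (t.substAll σ) (s.substAll σ)

/-- The substitution extending `σ` by `a` at index `0`, the other indices moving up by one. -/
def consSubst (a : Tm) (σ : ℕ → Tm) : ℕ → Tm
  | 0 => a
  | n + 1 => σ n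

/-- The simultaneous substitution performed by `Tm.subst _ j s`. -/
def singleSubst (j : ℕ) (s : Tm) (k : ℕ) : Tm :=
  if k = j then s else if j < k then .var (k - 1) else .var k

theorem liftRen_comp (f g : ℕ → ℕ) : liftRen (g ∘ f) = liftRen g ∘ liftRen f := by
  funext n; cases n <;> rfl

theorem liftSubst_var : liftSubst Tm.var = Tm.var := by
  funext n; cases n <;> rfl

theorem liftSubst_comp (σ : ℕ → Tm) (f : ℕ → ℕ) :
    liftSubst (σ ∘ f) = liftSubst σ ∘ liftRen f := by
  funext n; cases n <;> rfl

theorem Tm.substAll_var (t : Tm) : t.substAll Tm.var = t := by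
  induction t <;> simp_all only [Tm.substAll, liftSubst_var]

theorem Tm.rename_rename (t : Tm) (f g : ℕ → ℕ) : (t.rename f).rename g = t.rename (g ∘ f) := by
  induction t generalizing f g <;> simp_all only [Tm.rename, liftRen_comp, Function.comp_apply]

theorem Tm.substAll_rename (t : Tm) (f : ℕ → ℕ) (σ : ℕ → Tm) :
    (t.rename f).substAll σ = t.substAll (σ ∘ f) := by
  induction t generalizing f σ <;>
    simp_all only [Tm.rename, Tm.substAll, liftSubst_comp, Function.comp_apply]

theorem liftSubst_rename (σ : ℕ → Tm) (f : ℕ → ℕ) :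
    (liftSubst fun n => (σ n).rename f) = fun n => (liftSubst σ n).rename (liftRen f) := by
  funext n
  cases n with
  | zero => rfl
  | succ n => simp only [liftSubst, Tm.rename_rename]; rfl

theorem Tm.rename_substAll (t : Tm) (σ : ℕ → Tm) (f : ℕ → ℕ) :
    (t.substAll σ).rename f = t.substAll fun n => (σ n).rename f := by
  induction t generalizing σ f <;> simp_all only [Tm.rename, Tm.substAll, liftSubst_rename]

theorem liftSubst_substAll (σ τ : ℕ → Tm) :
    (liftSubst fun n => (σ n).substAll τ) = fun n => (liftSubst σ n).substAll (liftSubst τ) := by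
  funext n
  cases n with
  | zero => rfl
  | succ n => simp only [liftSubst, Tm.substAll_rename, Tm.rename_substAll]; rfl

theorem Tm.substAll_substAll (t : Tm) (σ τ : ℕ → Tm) :
    (t.substAll σ).substAll τ = t.substAll fun n => (σ n).substAll τ := by
  induction t generalizing σ τ <;> simp_all only [Tm.substAll, liftSubst_substAll]

theorem Tm.shift_one_eq_rename (t : Tm) (c : ℕ) :
    t.shift 1 c = t.rename fun k => if k < c then k else k + 1 := by
  have lift_cutoff (c : ℕ) : (fun k => if k < c + 1 then k else k + 1) =
      liftRen fun k => if k < c then k else k + 1 := by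
    funext n
    cases n <;> grind [liftRen]
  induction t generalizing c with
  | var k => simp only [Tm.shift, Tm.rename]; split_ifs <;> rfl
  | _ => simp_all only [Tm.shift, Tm.rename]

theorem Tm.shift_one_zero (t : Tm) : t.shift 1 0 = t.rename Nat.succ :=
  t.shift_one_eq_rename 0

theorem liftSubst_singleSubst (j : ℕ) (s : Tm) :
    liftSubst (singleSubst j s) = singleSubst (j + 1) (s.rename Nat.succ) := by
  funext n
  cases n <;> grind [liftSubst, singleSubst, Tm.rename]

theorem Tm.subst_eq_substAll (t : Tm) (j : ℕ) (s : Tm) :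
    t.subst j s = t.substAll (singleSubst j s) := by
  induction t generalizing j s <;>
    simp_all only [Tm.subst, Tm.substAll, Tm.shift_one_zero, liftSubst_singleSubst, singleSubst]

theorem Tm.subst_zero (t s : Tm) : t.subst 0 s = t.substAll (consSubst s Tm.var) := by
  have hσ : singleSubst 0 s = consSubst s Tm.var := by
    funext n; cases n <;> rfl
  rw [Tm.subst_eq_substAll, hσ]

theorem Tm.substAll_liftSubst_subst_zero (t a : Tm) (σ : ℕ → Tm) :
    (t.substAll (liftSubst σ)).subst 0 a = t.substAll (consSubst a σ) := by
  rw [Tm.subst_zero, Tm.substAll_substAll]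
  congr 1
  funext n
  cases n with
  | zero => rfl
  | succ n => exact (Tm.substAll_rename _ _ _).trans (Tm.substAll_var _)

/-! ### Subject reduction -/

/-- `Δ ⊢ σ : Γ`: the substitution `σ` takes terms over `Γ` to terms over `Δ`. -/
def SubstTyped (Δ : List MProp) (σ : ℕ → Tm) (Γ : List MProp) : Prop :=
  ∀ n Q, Γ[n]? = some Q → TJ Δ (σ n) Q

theorem TJ.rename {Γ Δ : List MProp} {t : Tm} {P : MProp} {f : ℕ → ℕ} (h : TJ Γ t P)
    (hf : ∀ n Q, Γ[n]? = some Q → Δ[f n]? = some Q) : TJ Δ (t.rename f) P := by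
  have lift {Γ Δ : List MProp} {f : ℕ → ℕ} (R : MProp)
      (hf : ∀ n Q, Γ[n]? = some Q → Δ[f n]? = some Q) :
      ∀ n Q, (R :: Γ)[n]? = some Q → (R :: Δ)[liftRen f n]? = some Q
    | 0, _, hQ => hQ
    | n + 1, Q, hQ => hf n Q hQ
  induction h generalizing Δ f with
  | var hn => exact .var (hf _ _ hn)
  | absT hP _ _ iht ihs => exact .absT hP (iht hf) (ihs hf)
  | _ => constructor <;> solve_by_elim

theorem SubstTyped.cons {Γ Δ : List MProp} {σ : ℕ → Tm} {P : MProp} {a : Tm}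
    (hσ : SubstTyped Δ σ Γ) (ha : TJ Δ a P) : SubstTyped Δ (consSubst a σ) (P :: Γ)
  | 0, _, hQ => Option.some.inj hQ ▸ ha
  | n + 1, Q, hQ => hσ n Q hQ

theorem SubstTyped.lift {Γ Δ : List MProp} {σ : ℕ → Tm} (hσ : SubstTyped Δ σ Γ) (P : MProp) :
    SubstTyped (P :: Δ) (liftSubst σ) (P :: Γ)
  | 0, _, hQ => .var hQ
  | n + 1, Q, hQ => (hσ n Q hQ).rename fun _ _ h => h

theorem substTyped_var (Γ : List MProp) : SubstTyped Γ Tm.var Γ :=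
  fun _ _ hQ => .var hQ

theorem TJ.substAll {Γ Δ : List MProp} {t : Tm} {P : MProp} {σ : ℕ → Tm} (h : TJ Γ t P)
    (hσ : SubstTyped Δ σ Γ) : TJ Δ (t.substAll σ) P := by
  induction h generalizing Δ σ with
  | var hn => exact hσ _ _ hn
  | absT hP _ _ iht ihs => exact .absT hP (iht hσ) (ihs hσ)
  | _ => constructor <;> solve_by_elim [SubstTyped.lift]

theorem TJ.subst_zero {Γ : List MProp} {t s : Tm} {P Q : MProp} (ht : TJ (Q :: Γ) t P)
    (hs : TJ Γ s Q) : TJ Γ (t.subst 0 s) P :=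
  t.subst_zero s ▸ ht.substAll ((substTyped_var Γ).cons hs)

theorem TJ.absE_pos {Γ : List MProp} {t s : Tm} {A : PureProp} (ht : TJ Γ t (.cp A))
    (hs : TJ Γ s (.cn A)) (Q : MProp) : TJ Γ (absE Q .pos t s) Q :=
  .absT (P := .sp A) trivial (.appP ht hs) (.appN hs ht)

theorem TJ.absE_neg {Γ : List MProp} {t s : Tm} {A : PureProp} (ht : TJ Γ t (.cn A))
    (hs : TJ Γ s (.cp A)) (Q : MProp) : TJ Γ (absE Q .neg t s) Q :=
  .absT (P := .sn A) trivial (.appN ht hs) (.appP hs ht)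

theorem TJ.of_red {Γ : List MProp} {t t' : Tm} {P : MProp} (h : TJ Γ t P) (hr : Red t t') :
    TJ Γ t' P := by
  induction hr generalizing Γ P with
  | proj1 | proj2 | negRed => cases h with | _ h => cases h; assumption
  | case1 =>
    cases h with
    | caseP h hs _ | caseN h hs _ => cases h with | _ ha => exact hs.subst_zero ha
  | case2 =>
    cases h with
    | caseP h _ hu | caseN h _ hu => cases h with | _ ha => exact hu.subst_zero ha
  | beta =>
    cases h with
    | appP h hs | appN h hs => cases h with | _ ht => exact ht.subst_zero hs
  | absPairInj1 | absPairInj2 | absInjPair1 | absInjPair2 | absNeg =>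
    cases h with
    | absT _ ht hs =>
      cases ht <;> cases hs <;> (first | apply absE_pos | apply absE_neg) <;> assumption
  | _ => cases h <;> constructor <;> solve_by_elim

theorem TJ.of_redStar {Γ : List MProp} {t t' : Tm} {P : MProp} (h : TJ Γ t P)
    (hr : RedStar t t') : TJ Γ t' P := by
  induction hr with
  | refl => exact h
  | tail _ hr ih => exact ih.of_red hr

/-! ### Explosions are open -/

/-- Classical truth of a pure proposition under the valuation `v`. -/
def PureProp.holds (v : ℕ → Prop) : PureProp → Prop
  | .var n => v n
  | .conj A B => A.holds v ∧ B.holds v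
  | .disj A B => A.holds v ∨ B.holds v
  | .neg A => ¬ A.holds v

/-- Classical reading of a moded proposition under the valuation `v`: positive modes assert truth
and negative modes assert falsity, whatever the strength. -/
def MProp.holds (v : ℕ → Prop) : MProp → Prop
  | .sp A | .cp A => A.holds v
  | .sn A | .cn A => ¬ A.holds v

theorem MProp.holds_opp (v : ℕ → Prop) (P : MProp) : P.opp.holds v ↔ ¬ P.holds v := by
  cases P <;> simp only [opp, holds, not_not]

theorem TJ.holds {Γ : List MProp} {t : Tm} {P : MProp} (h : TJ Γ t P) (v : ℕ → Prop)
    (hΓ : ∀ Q ∈ Γ, Q.holds v) : P.holds v := by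
  induction h with
  | var hn => exact hΓ _ (List.mem_of_getElem? hn)
  | absT _ _ _ iht ihs => exact ((MProp.holds_opp v _).mp (ihs hΓ) (iht hΓ)).elim
  | caseP _ _ _ iht ihs ihu =>
    exact (iht hΓ).elim (fun hA => ihs (List.forall_mem_cons.mpr ⟨hA, hΓ⟩))
      fun hB => ihu (List.forall_mem_cons.mpr ⟨hB, hΓ⟩)
  | caseN _ _ _ iht ihs ihu =>
    exact (not_and_or.mp (iht hΓ)).elim (fun hA => ihs (List.forall_mem_cons.mpr ⟨hA, hΓ⟩))
      fun hB => ihu (List.forall_mem_cons.mpr ⟨hB, hΓ⟩)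
  | lamP _ ih =>
    by_contra hA
    exact hA (ih (List.forall_mem_cons.mpr ⟨hA, hΓ⟩))
  | lamN _ ih => exact fun hA => ih (List.forall_mem_cons.mpr ⟨hA, hΓ⟩) hA
  | _ => simp_all only [MProp.holds, PureProp.holds]; tauto

theorem TJ.take_of_closedAt {Γ : List MProp} {t : Tm} {P : MProp} {c : ℕ} (h : TJ Γ t P)
    (hc : t.closedAt c) : TJ (Γ.take c) t P := by
  induction h generalizing c with
  | var hn => exact .var ((List.getElem?_take_of_lt hc).trans hn)
  | absT hP _ _ iht ihs => exact .absT hP (iht hc.1) (ihs hc.2)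
  | pairP _ _ iht ihs => exact .pairP (iht hc.1) (ihs hc.2)
  | pairN _ _ iht ihs => exact .pairN (iht hc.1) (ihs hc.2)
  | appP _ _ iht ihs => exact .appP (iht hc.1) (ihs hc.2)
  | appN _ _ iht ihs => exact .appN (iht hc.1) (ihs hc.2)
  | caseP _ _ _ iht ihs ihu => exact .caseP (iht hc.1) (ihs hc.2.1) (ihu hc.2.2)
  | caseN _ _ _ iht ihs ihu => exact .caseN (iht hc.1) (ihs hc.2.1) (ihu hc.2.2)
  | lamP _ ih => exact .lamP (ih hc)
  | lamN _ ih => exact .lamN (ih hc)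
  | _ _ ih => constructor; exact ih hc

theorem TJ.exists_opp_of_isExplosion {Γ : List MProp} {t : Tm} {P : MProp} (h : TJ Γ t P)
    (ht : t.isExplosion) : ∃ Q a b, TJ Γ a Q ∧ TJ Γ b Q.opp := by
  cases h with
  | absT _ ha hb | appP ha hb | appN ha hb => exact ⟨_, _, _, ha, hb⟩
  | _ => exact ht.elim

theorem TJ.not_isExplosion_nil {t : Tm} {P : MProp} (h : TJ [] t P) : ¬ t.isExplosion := by
  intro ht
  obtain ⟨Q, a, b, ha, hb⟩ := h.exists_opp_of_isExplosion ht
  let v : ℕ → Prop := fun _ => True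
  have ha_true := ha.holds v (List.forall_mem_nil _)
  have hb_true := hb.holds v (List.forall_mem_nil _)
  exact (MProp.holds_opp v Q).mp hb_true ha_true

theorem TJ.isOpen_of_isExplosion {Γ : List MProp} {t : Tm} {P : MProp} (h : TJ Γ t P)
    (ht : t.isExplosion) : t.isOpen :=
  fun hc => (h.take_of_closedAt hc).not_isExplosion_nil ht

/-! ### Head normal forms -/

/-- Neutral terms: a variable or an explosion under eliminations. Explosions block evaluation here,
even those that are redexes. -/
inductive Tm.IsNeutral : Tm → Prop
  | var (n : ℕ) : IsNeutral (.var n)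
  | explosion {t : Tm} : t.isExplosion → IsNeutral t
  | proj (sg : Sign) (i : Bool) {t : Tm} : IsNeutral t → IsNeutral (.proj sg i t)
  | case (sg : Sign) (P Q : MProp) (s u : Tm) {t : Tm} :
      IsNeutral t → IsNeutral (.case sg t P s Q u)
  | nege (sg : Sign) {t : Tm} : IsNeutral t → IsNeutral (.nege sg t)

theorem TJ.exists_of_proj {Γ : List MProp} {sg : Sign} {i : Bool} {t : Tm} {P : MProp}
    (h : TJ Γ (.proj sg i t) P) : ∃ Q, TJ Γ t Q := by
  cases h with | _ ht => exact ⟨_, ht⟩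

theorem TJ.exists_of_nege {Γ : List MProp} {sg : Sign} {t : Tm} {P : MProp}
    (h : TJ Γ (.nege sg t) P) : ∃ Q, TJ Γ t Q := by
  cases h with | _ ht => exact ⟨_, ht⟩

theorem TJ.exists_isStrong_of_case {Γ : List MProp} {sg : Sign} {t s u : Tm} {P Q R : MProp}
    (h : TJ Γ (.case sg t P s Q u) R) : ∃ S : MProp, S.isStrong ∧ TJ Γ t S := by
  cases h with | caseP ht | caseN ht => exact ⟨_, by trivial, ht⟩

theorem TJ.not_isNeutral_nil {t : Tm} {P : MProp} (h : TJ [] t P) : ¬ t.IsNeutral := by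
  intro ht
  induction ht generalizing P with
  | var n => cases h with | var hn => simp at hn
  | explosion he => exact h.not_isExplosion_nil he
  | _ => cases h <;> solve_by_elim

theorem Tm.IsNeutral.exists_elimCtx {Γ : List MProp} {t : Tm} {P : MProp} (ht : t.IsNeutral)
    (h : TJ Γ t P) : ∃ (E : ElimCtx) (t' : Tm), t = E.plug t' ∧
      ((∃ n, t' = Tm.var n) ∨ (t'.isExplosion ∧ t'.isOpen)) := by
  induction ht generalizing P with
  | var n => exact ⟨.hole, _, rfl, .inl ⟨n, rfl⟩⟩
  | explosion he => exact ⟨.hole, _, rfl, .inr ⟨he, h.isOpen_of_isExplosion he⟩⟩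
  | proj sg i _ ih =>
    obtain ⟨Q, hQ⟩ := h.exists_of_proj
    obtain ⟨E, t', rfl, ht'⟩ := ih hQ
    exact ⟨.proj sg i E, t', rfl, ht'⟩
  | case sg Q R s u _ ih =>
    obtain ⟨S, -, hS⟩ := h.exists_isStrong_of_case
    obtain ⟨E, t', rfl, ht'⟩ := ih hS
    exact ⟨.case sg E Q s R u, t', rfl, ht'⟩
  | nege sg _ ih =>
    obtain ⟨Q, hQ⟩ := h.exists_of_nege
    obtain ⟨E, t', rfl, ht'⟩ := ih hQ
    exact ⟨.nege sg E, t', rfl, ht'⟩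

theorem MProp.isStrong_iff_not_isClassical (P : MProp) : P.isStrong ↔ ¬ P.isClassical := by
  cases P <;> simp only [isStrong, isClassical, not_true, not_false_iff]

theorem Tm.IsNeutral.exists_caseCtx {Γ : List MProp} {t : Tm} {P : MProp} (ht : t.IsNeutral)
    (hΓ : ∀ Q ∈ Γ, Q.isClassical) (hP : P.isStrong) (h : TJ Γ t P) :
    ∃ (K : CaseCtx) (t' : Tm), t = K.plug t' ∧ t'.isExplosion ∧ t'.isOpen := by
  induction ht generalizing P with
  | var n =>
    cases h with
    | var hn =>
      exact (P.isStrong_iff_not_isClassical.mp hP (hΓ P (List.mem_of_getElem? hn))).elim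
  | explosion he => exact ⟨.hole, _, rfl, he, h.isOpen_of_isExplosion he⟩
  | proj | nege => cases h <;> exact hP.elim
  | case sg Q R s u _ ih =>
    obtain ⟨S, hStrong, hS⟩ := h.exists_isStrong_of_case
    obtain ⟨K, t', rfl, ht'⟩ := ih hStrong hS
    exact ⟨.case sg K Q s R u, t', rfl, ht'⟩

theorem TJ.exists_eq_lam {Γ : List MProp} {t : Tm} {P : MProp} (h : TJ Γ t P)
    (hP : P.isClassical) (ht : t.isCanonical) : ∃ sg Q u, t = .lam sg Q u := by
  cases h with
  | lamP | lamN => exact ⟨_, _, _, rfl⟩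
  | pairP | pairN | injP1 | injP2 | injN1 | injN2 | negiP | negiN => exact hP.elim
  | _ => exact ht.elim

/-! ### Head normalization -/

/-- Hereditary head normalization: `t` reduces to a neutral term, to an abstraction, or to another
introduction form whose components are again of this kind. It serves as an untyped reducibility
predicate. -/
inductive Tm.HeadNormalizes : Tm → Prop
  | neutral {t : Tm} : t.IsNeutral → HeadNormalizes t
  | lam (sg : Sign) (P : MProp) (t : Tm) : HeadNormalizes (.lam sg P t)
  | pair (sg : Sign) {t s : Tm} :
      HeadNormalizes t → HeadNormalizes s → HeadNormalizes (.pair sg t s)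
  | inj (sg : Sign) (i : Bool) {t : Tm} : HeadNormalizes t → HeadNormalizes (.inj sg i t)
  | negi (sg : Sign) {t : Tm} : HeadNormalizes t → HeadNormalizes (.negi sg t)
  | expand {t t' : Tm} : Red t t' → HeadNormalizes t' → HeadNormalizes t

theorem Tm.HeadNormalizes.exists_redStar {t : Tm} (ht : t.HeadNormalizes) :
    ∃ t', RedStar t t' ∧ (t'.isCanonical ∨ t'.IsNeutral) := by
  induction ht with
  | neutral hn => exact ⟨_, .refl, .inr hn⟩
  | expand hr _ ih =>
    obtain ⟨v, hrv, hv⟩ := ih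
    exact ⟨v, .head hr hrv, hv⟩
  | _ => exact ⟨_, .refl, .inl trivial⟩

theorem Tm.HeadNormalizes.proj {Γ : List MProp} {sg : Sign} {i : Bool} {t : Tm} {P : MProp}
    (ht : t.HeadNormalizes) (h : TJ Γ (.proj sg i t) P) : (Tm.proj sg i t).HeadNormalizes := by
  induction ht with
  | neutral hn => exact .neutral (hn.proj sg i)
  | pair _ ht hs =>
    cases h with
    | projP1 h | projN1 h => cases h; exact .expand .proj1 ht
    | projP2 h | projN2 h => cases h; exact .expand .proj2 hs
  | expand hr _ ih => exact .expand (.projC hr) (ih (h.of_red (.projC hr)))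
  | _ => cases h with | _ h => cases h

theorem Tm.HeadNormalizes.nege {Γ : List MProp} {sg : Sign} {t : Tm} {P : MProp}
    (ht : t.HeadNormalizes) (h : TJ Γ (.nege sg t) P) : (Tm.nege sg t).HeadNormalizes := by
  induction ht with
  | neutral hn => exact .neutral (hn.nege sg)
  | negi _ ht => cases h with | _ h => cases h; exact .expand .negRed ht
  | expand hr _ ih => exact .expand (.negeC hr) (ih (h.of_red (.negeC hr)))
  | _ => cases h with | _ h => cases h

theorem Tm.HeadNormalizes.case {Γ : List MProp} {sg : Sign} {t s u : Tm} {P Q R : MProp}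
    (ht : t.HeadNormalizes) (h : TJ Γ (.case sg t P s Q u) R)
    (hs : ∀ a, TJ Γ a P → a.HeadNormalizes → (s.subst 0 a).HeadNormalizes)
    (hu : ∀ a, TJ Γ a Q → a.HeadNormalizes → (u.subst 0 a).HeadNormalizes) :
    (Tm.case sg t P s Q u).HeadNormalizes := by
  induction ht with
  | neutral hn => exact .neutral (hn.case sg P Q s u)
  | inj _ i ha =>
    cases h with
    | caseP h =>
      cases h with
      | injP1 hTa => exact .expand .case1 (hs _ hTa ha)
      | injP2 hTa => exact .expand .case2 (hu _ hTa ha)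
    | caseN h =>
      cases h with
      | injN1 hTa => exact .expand .case1 (hs _ hTa ha)
      | injN2 hTa => exact .expand .case2 (hu _ hTa ha)
  | expand hr _ ih => exact .expand (.caseC1 hr) (ih (h.of_red (.caseC1 hr)))
  | _ => cases h with | caseP h | caseN h => cases h

theorem forall_consSubst {p : Tm → Prop} {a : Tm} {σ : ℕ → Tm} (ha : p a) (hσ : ∀ n, p (σ n)) :
    ∀ n, p (consSubst a σ n)
  | 0 => ha
  | n + 1 => hσ n

theorem TJ.headNormalizes_substAll {Γ Δ : List MProp} {t : Tm} {P : MProp} {σ : ℕ → Tm}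
    (h : TJ Γ t P) (hσ : SubstTyped Δ σ Γ) (hn : ∀ n, (σ n).HeadNormalizes) :
    (t.substAll σ).HeadNormalizes := by
  have hT := h.substAll hσ
  induction h generalizing Δ σ with
  | var => exact hn _
  | absT | appP | appN => exact .neutral (.explosion trivial)
  | lamP | lamN => exact .lam _ _ _
  | pairP ht hs iht ihs | pairN ht hs iht ihs =>
    exact .pair _ (iht hσ hn (ht.substAll hσ)) (ihs hσ hn (hs.substAll hσ))
  | injP1 h ih | injP2 h ih | injN1 h ih | injN2 h ih =>
    exact .inj _ _ (ih hσ hn (h.substAll hσ))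
  | negiP h ih | negiN h ih => exact .negi _ (ih hσ hn (h.substAll hσ))
  | projP1 h ih | projP2 h ih | projN1 h ih | projN2 h ih =>
    exact (ih hσ hn (h.substAll hσ)).proj hT
  | negeP h ih | negeN h ih => exact (ih hσ hn (h.substAll hσ)).nege hT
  | caseP ht hs hu iht ihs ihu | caseN ht hs hu iht ihs ihu =>
    refine (iht hσ hn (ht.substAll hσ)).case hT (fun a hTa ha => ?_) fun a hTa ha => ?_
    · rw [Tm.substAll_liftSubst_subst_zero]
      exact ihs (hσ.cons hTa) (forall_consSubst ha hn) (hs.substAll (hσ.cons hTa))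
    · rw [Tm.substAll_liftSubst_subst_zero]
      exact ihu (hσ.cons hTa) (forall_consSubst ha hn) (hu.substAll (hσ.cons hTa))

theorem TJ.headNormalizes {Γ : List MProp} {t : Tm} {P : MProp} (h : TJ Γ t P) :
    t.HeadNormalizes :=
  t.substAll_var ▸ h.headNormalizes_substAll (substTyped_var Γ) fun n => .neutral (.var n)

theorem TJ.exists_redStar_isCanonical_or_isNeutral {Γ : List MProp} {t : Tm} {P : MProp}
    (h : TJ Γ t P) :
    ∃ v, RedStar t v ∧ TJ Γ v P ∧ (v.isCanonical ∨ v.IsNeutral) := by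
  obtain ⟨v, hr, hv⟩ := h.headNormalizes.exists_redStar
  exact ⟨v, hr, h.of_redStar hr, hv⟩

theorem canonicity_general :
    (∀ (t : Tm) (P : MProp), TJ [] t P → ∃ t', RedStar t t' ∧ Tm.isCanonical t') ∧
    (∀ (Γ : List MProp) (t : Tm) (P : MProp),
      (∀ Q ∈ Γ, MProp.isClassical Q) → MProp.isStrong P → TJ Γ t P →
      (∃ t', RedStar t t' ∧ Tm.isCanonical t') ∨
      (∃ (K : CaseCtx) (t' : Tm), RedStar t (K.plug t') ∧ Tm.isExplosion t' ∧ Tm.isOpen t')) ∧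
    (∀ (Γ : List MProp) (t : Tm) (P : MProp), MProp.isClassical P → TJ Γ t P →
      (∃ (sg : Sign) (Q : MProp) (u : Tm), RedStar t (Tm.lam sg Q u)) ∨
      (∃ (E : ElimCtx) (t' : Tm), RedStar t (E.plug t') ∧
        ((∃ n, t' = Tm.var n) ∨ (Tm.isExplosion t' ∧ Tm.isOpen t')))) := by
  refine ⟨fun t P h => ?_, fun Γ t P hΓ hP h => ?_, fun Γ t P hP h => ?_⟩ <;>
    obtain ⟨v, hr, hv, hcan | hneu⟩ := h.exists_redStar_isCanonical_or_isNeutral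
  · exact ⟨v, hr, hcan⟩
  · exact (hv.not_isNeutral_nil hneu).elim
  · exact .inl ⟨v, hr, hcan⟩
  · obtain ⟨K, t', rfl, ht'⟩ := hneu.exists_caseCtx hΓ hP hv
    exact .inr ⟨K, t', hr, ht'⟩
  · obtain ⟨sg, Q, u, rfl⟩ := hv.exists_eq_lam hP hcan
    exact .inl ⟨sg, Q, u, hr⟩
  · obtain ⟨E, t', rfl, ht'⟩ := hneu.exists_elimCtx hv
    exact .inr ⟨E, t', hr, ht'⟩

/-- Canonicity for λPRK. -/
theorem canonicity :
    (∀ (t : Tm) (P : MProp), TJ [] t P →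
      ∃ t', RedStar t t' ∧ Tm.isCanonical t') ∧
    (∀ (Γ : List MProp) (t : Tm) (P : MProp),
      (∀ Q ∈ Γ, MProp.isClassical Q) → MProp.isStrong P → TJ Γ t P →
      (∃ t', RedStar t t' ∧ Tm.isCanonical t') ∨
      (∃ (K : CaseCtx) (t' : Tm), RedStar t (K.plug t') ∧ Tm.isExplosion t' ∧ Tm.isOpen t')) ∧
    (∀ (Γ : List MProp) (t : Tm) (P : MProp),
      (∀ Q ∈ Γ, MProp.isClassical Q) → MProp.isClassical P → TJ Γ t P →
      (∃ (sg : Sign) (Q : MProp) (u : Tm), RedStar t (Tm.lam sg Q u)) ∨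
      (∃ (E : ElimCtx) (t' : Tm), RedStar t (E.plug t') ∧
        ((∃ n, t' = Tm.var n) ∨ (Tm.isExplosion t' ∧ Tm.isOpen t')))) :=
  have ⟨closed, strong, classical⟩ := canonicity_general
  ⟨closed, strong, fun Γ t P _ => classical Γ t P⟩
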